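/- arXiv:1408.7107 — 3 statements merged into one kernel-verified Lean document; each statement's English description precedes it below -/
import Mathlib

section
/- Let m₀ ≥ 1 be an integer and let (ε_m)_{m ≥ m₀} be real numbers with 0 ≤ ε_m < π/4 for every m ≥ m₀ and Σ_{m ≥ m₀} ε_m² < ∞. Let V : ℝ → ℝ be nondecreasing on [m₀π, ∞) with V(r) > 0 for all r ≥ m₀π, and suppose that for every integer m ≥ m₀, V is differentiable on the interval I_m = [mπ + ε_m, (m+1)π − ε_{m+1}] and satisfies V'(r) ≥ (2/(π·r))·V(r) for all r ∈ I_m. Then there exists a constant C > 0 such that V(mπ) ≥ C·m^(2/π) for all integers m ≥ m₀. -/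
theorem aux_log (x d M : ℝ) (hM : 0 < M) (hx : M ≤ x) (hd : 0 ≤ d) :
    Real.log (x + d) - Real.log x ≤ d ^ 2 + 1 / M ^ 2 := by
  have hx0 : 0 < x := by linarith
  have h1 : Real.log (x + d) - Real.log x ≤ d / x := by
    rw [← Real.log_div (by linarith) (by linarith)]
    have := Real.log_le_sub_one_of_pos (show 0 < (x + d) / x by positivity)
    have h2 : (x + d) / x - 1 = d / x := by field_simp; ring
    linarith
  have h2 : d / x ≤ d / M := by gcongr
  have h3 : d / M ≤ d ^ 2 + 1 / M ^ 2 := by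
    have e1 : d / M = d * M⁻¹ := by ring
    have e2 : 1 / M ^ 2 = (M⁻¹) ^ 2 := by simp
    rw [e1, e2]
    nlinarith [sq_nonneg (d - M⁻¹), sq_nonneg d, sq_nonneg M⁻¹]
  linarith

/-- A positive nondecreasing function on `[m₀π, ∞)` satisfying `V' ≥ (2/(πr)) V`
on each interval `[mπ + ε_m, (m+1)π − ε_{m+1}]` with square-summable `ε_m`
grows at least like `m^(2/π)` along the points `mπ`. -/
theorem stmt_1 (m₀ : ℕ) (hm₀ : 1 ≤ m₀) (ε : ℕ → ℝ)
    (hε : ∀ m, m₀ ≤ m → 0 ≤ ε m ∧ ε m < Real.pi / 4)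
    (hεsum : Summable (fun m : ℕ => (ε m) ^ 2))
    (V : ℝ → ℝ)
    (hmono : MonotoneOn V (Set.Ici ((m₀ : ℝ) * Real.pi)))
    (hpos : ∀ r : ℝ, (m₀ : ℝ) * Real.pi ≤ r → 0 < V r)
    (hdiff : ∀ m : ℕ, m₀ ≤ m →
      DifferentiableOn ℝ V
        (Set.Icc ((m : ℝ) * Real.pi + ε m) (((m : ℝ) + 1) * Real.pi - ε (m + 1))))
    (hineq : ∀ m : ℕ, m₀ ≤ m →
      ∀ r ∈ Set.Icc ((m : ℝ) * Real.pi + ε m) (((m : ℝ) + 1) * Real.pi - ε (m + 1)),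
        derivWithin V
            (Set.Icc ((m : ℝ) * Real.pi + ε m) (((m : ℝ) + 1) * Real.pi - ε (m + 1))) r
          ≥ (2 / (Real.pi * r)) * V r) :
    ∃ C : ℝ, 0 < C ∧ ∀ m : ℕ, m₀ ≤ m →
      V ((m : ℝ) * Real.pi) ≥ C * (m : ℝ) ^ (2 / Real.pi) := by
  have hpi := Real.pi_gt_three
  have hpi4 := Real.pi_le_four
  have ha0 : 0 < 2 / Real.pi := by positivity
  have ha1 : 2 / Real.pi ≤ 1 := by rw [div_le_one (by positivity)]; linarith
  obtain ⟨δ, hδ⟩ : ∃ δ : ℕ → ℝ, δ = fun (m : ℕ) => (ε m) ^ 2 + 1 / (m : ℝ) ^ 2 := ⟨_, rfl⟩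
  have hδ0 : ∀ m, 0 ≤ δ m := by intro m; rw [hδ]; positivity
  have hδs : Summable δ := by
    rw [hδ]
    exact hεsum.add (Real.summable_one_div_nat_pow.mpr (by norm_num))
  obtain ⟨G, hG⟩ : ∃ G : ℕ → ℝ, G = fun (m : ℕ) => Real.log (V ((m : ℝ) * Real.pi))
      - 2 / Real.pi * Real.log ((m : ℝ) * Real.pi) := ⟨_, rfl⟩
  have step : ∀ m, m₀ ≤ m → G m ≤ G (m + 1) + δ m + δ (m + 1) := by
    intro m hm
    have hm1 : (1 : ℝ) ≤ m := by exact_mod_cast hm₀.trans hm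
    have hm0 : (m₀ : ℝ) ≤ m := by exact_mod_cast hm
    obtain ⟨he0, he1⟩ := hε m hm
    obtain ⟨hf0, hf1⟩ := hε (m + 1) (by omega)
    have hlow : (m₀ : ℝ) * Real.pi ≤ m * Real.pi := by gcongr
    have hmp : (m : ℝ) ≤ m * Real.pi := by nlinarith
    set A := (m : ℝ) * Real.pi + ε m with hA
    set B := ((m : ℝ) + 1) * Real.pi - ε (m + 1) with hB
    have hAB : A ≤ B := by rw [hA, hB]; linarith
    have hge : ∀ r ∈ Set.Icc A B, (m₀ : ℝ) * Real.pi ≤ r := fun r hr => by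
      linarith [hr.1]
    have hrpos : ∀ r ∈ Set.Icc A B, 0 < r := fun r hr => by linarith [hr.1]
    have hdm := hdiff m hm
    have him := hineq m hm
    have hD : ∀ r ∈ interior (Set.Icc A B),
        HasDerivAt (fun r => Real.log (V r) - 2 / Real.pi * Real.log r)
          (derivWithin V (Set.Icc A B) r / V r - 2 / Real.pi * r⁻¹) r := by
      intro r hr
      have hr' := interior_subset hr
      have h1 : HasDerivAt V (derivWithin V (Set.Icc A B) r) r :=
        ((hdm r hr').hasDerivWithinAt).hasDerivAt (mem_interior_iff_mem_nhds.mp hr)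
      exact (h1.log (hpos r (hge r hr')).ne').sub
        ((Real.hasDerivAt_log (hrpos r hr').ne').const_mul _)
    have hmon : MonotoneOn (fun r => Real.log (V r) - 2 / Real.pi * Real.log r)
        (Set.Icc A B) := by
      apply monotoneOn_of_deriv_nonneg (convex_Icc A B)
      · apply ContinuousOn.sub
        · exact hdm.continuousOn.log (fun r hr => (hpos r (hge r hr)).ne')
        · exact continuousOn_const.mul
            (continuousOn_id.log (fun r hr => (hrpos r hr).ne'))
      · exact fun r hr => (hD r hr).differentiableAt.differentiableWithinAt
      · intro r hr
        rw [(hD r hr).deriv]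
        have hr' := interior_subset hr
        have hV := hpos r (hge r hr')
        have hr0 := hrpos r hr'
        have h2 := him r hr'
        have h3 : 2 / (Real.pi * r) ≤ derivWithin V (Set.Icc A B) r / V r := by
          rw [le_div_iff₀ hV]; exact h2
        have h4 : 2 / Real.pi * r⁻¹ = 2 / (Real.pi * r) := by field_simp
        linarith
    have h5 := hmon (Set.left_mem_Icc.mpr hAB) (Set.right_mem_Icc.mpr hAB) hAB
    simp only at h5
    have h6 : Real.log (V ((m : ℝ) * Real.pi)) ≤ Real.log (V A) :=
      Real.log_le_log (hpos _ hlow)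
        (hmono hlow (hge A (Set.left_mem_Icc.mpr hAB)) (by linarith))
    have hlow2 : (m₀ : ℝ) * Real.pi ≤ ((m : ℝ) + 1) * Real.pi := by linarith
    have h7 : Real.log (V B) ≤ Real.log (V (((m : ℝ) + 1) * Real.pi)) :=
      Real.log_le_log (hpos _ (hge B (Set.right_mem_Icc.mpr hAB)))
        (hmono (hge B (Set.right_mem_Icc.mpr hAB)) hlow2 (by linarith))
    have h8 := aux_log ((m : ℝ) * Real.pi) (ε m) m (by linarith) hmp he0
    have h9 := aux_log B (ε (m + 1)) (m + 1) (by linarith) (by rw [hB]; nlinarith) hf0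
    rw [show B + ε (m + 1) = ((m : ℝ) + 1) * Real.pi by rw [hB]; ring] at h9
    rw [← hA] at h8
    have d0 := hδ0 m
    have d1 := hδ0 (m + 1)
    have e0 : δ m = (ε m) ^ 2 + 1 / (m : ℝ) ^ 2 := by rw [hδ]
    have e1 : δ (m + 1) = (ε (m + 1)) ^ 2 + 1 / ((m : ℝ) + 1) ^ 2 := by
      rw [hδ]; push_cast; rfl
    rw [← e0] at h8
    rw [← e1] at h9
    have k8 := mul_le_mul_of_nonneg_left h8 ha0.le
    have k9 := mul_le_mul_of_nonneg_left h9 ha0.le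
    have j8 := mul_le_mul_of_nonneg_right ha1 d0
    have j9 := mul_le_mul_of_nonneg_right ha1 d1
    rw [mul_sub] at k8 k9
    rw [hG]
    push_cast
    linarith
  have hind : ∀ m, m₀ ≤ m → G m₀ ≤ G m + ∑ k ∈ Finset.range m, δ k
      + ∑ k ∈ Finset.range (m + 1), δ k := by
    intro m hm
    induction m, hm using Nat.le_induction with
    | base =>
      have h1 := Finset.sum_nonneg (s := Finset.range m₀) (fun k _ => hδ0 k)
      have h2 := Finset.sum_nonneg (s := Finset.range (m₀ + 1)) (fun k _ => hδ0 k)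
      linarith
    | succ m hm ih =>
      have h1 := step m hm
      rw [Finset.sum_range_succ δ (m + 1)]
      have h2 := Finset.sum_range_succ δ m
      linarith
  refine ⟨Real.exp (G m₀ - 2 * (∑' k, δ k) + 2 / Real.pi * Real.log Real.pi),
    Real.exp_pos _, ?_⟩
  intro m hm
  have hm1 : (1 : ℝ) ≤ m := by exact_mod_cast hm₀.trans hm
  have hm0 : (m₀ : ℝ) ≤ m := by exact_mod_cast hm
  have hlow : (m₀ : ℝ) * Real.pi ≤ m * Real.pi := by gcongr
  have h1 := hind m hm
  have h2 := hδs.sum_le_tsum (Finset.range m) (fun k _ => hδ0 k)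
  have h3 := hδs.sum_le_tsum (Finset.range (m + 1)) (fun k _ => hδ0 k)
  have h4 : G m = Real.log (V ((m : ℝ) * Real.pi))
      - 2 / Real.pi * (Real.log m + Real.log Real.pi) := by
    rw [hG, ← Real.log_mul (by linarith) (by linarith)]
  rw [Real.rpow_def_of_pos (by linarith), ← Real.exp_add, ge_iff_le,
    ← Real.le_log_iff_exp_le (hpos _ hlow)]
  rw [mul_add] at h4
  linarith
end

section
/- Let R > 0 and let δ be a real number with π²/(8R) < δ < π/2. Then R·sin θ − π/4 > 0 for all θ ∈ [δ, π/2], and ∫_δ^{π/2} dθ/(R·sin θ − π/4) ≤ (π/(2R))·log( (π/2 − π²/(8R)) / (δ − π²/(8R)) ). -/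
/-- For `R > 0` and `π²/(8R) < δ < π/2`, the integrand `1/(R sin θ − π/4)` is
positive on `[δ, π/2]` and its integral is bounded using `sin θ ≥ (2/π) θ`. -/
theorem stmt_5 (R δ : ℝ) (hR : 0 < R)
    (h1 : Real.pi ^ 2 / (8 * R) < δ) (h2 : δ < Real.pi / 2) :
    (∀ θ ∈ Set.Icc δ (Real.pi / 2), 0 < R * Real.sin θ - Real.pi / 4) ∧
    (∫ θ in δ..(Real.pi / 2), 1 / (R * Real.sin θ - Real.pi / 4))
      ≤ (Real.pi / (2 * R)) *
        Real.log ((Real.pi / 2 - Real.pi ^ 2 / (8 * R)) / (δ - Real.pi ^ 2 / (8 * R))) := by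
  have hpi := Real.pi_pos
  set c : ℝ := Real.pi ^ 2 / (8 * R) with hc
  have hc0 : 0 < c := by positivity
  have key : ∀ θ ∈ Set.Icc δ (Real.pi / 2),
      2 * R / Real.pi * (θ - c) ≤ R * Real.sin θ - Real.pi / 4 := by
    intro θ hθ
    have h := Real.mul_le_sin (by linarith [hθ.1] : 0 ≤ θ) hθ.2
    have h' := mul_le_mul_of_nonneg_left h hR.le
    have e : 2 * R / Real.pi * (θ - c) = R * (2 / Real.pi * θ) - Real.pi / 4 := by
      rw [hc]; field_simp; ring
    linarith
  have hlow : ∀ θ ∈ Set.Icc δ (Real.pi / 2), 0 < 2 * R / Real.pi * (θ - c) := by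
    intro θ hθ
    have : 0 < θ - c := by linarith [hθ.1]
    positivity
  have hpos : ∀ θ ∈ Set.Icc δ (Real.pi / 2), 0 < R * Real.sin θ - Real.pi / 4 :=
    fun θ hθ => (hlow θ hθ).trans_le (key θ hθ)
  refine ⟨hpos, ?_⟩
  have hI : ∫ θ in δ..(Real.pi / 2), Real.pi / (2 * R) * (θ - c)⁻¹ =
      Real.pi / (2 * R) * Real.log ((Real.pi / 2 - c) / (δ - c)) := by
    rw [intervalIntegral.integral_const_mul,
      intervalIntegral.integral_comp_sub_right (fun x => x⁻¹) c,
      integral_inv_of_pos (by linarith) (by linarith)]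
  rw [← hI]
  apply intervalIntegral.integral_mono_on h2.le
  · apply ContinuousOn.intervalIntegrable
    rw [Set.uIcc_of_le h2.le]
    exact ContinuousOn.div (by fun_prop) (by fun_prop) (fun θ hθ => (hpos θ hθ).ne')
  · apply ContinuousOn.intervalIntegrable
    rw [Set.uIcc_of_le h2.le]
    refine ContinuousOn.mul (by fun_prop) (ContinuousOn.inv₀ (by fun_prop) ?_)
    intro θ hθ
    have : 0 < θ - c := by linarith [hθ.1]
    exact this.ne'
  · intro θ hθ
    have h := one_div_le_one_div_of_le (hlow θ hθ) (key θ hθ)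
    refine h.trans (le_of_eq ?_)
    rw [one_div, mul_inv, inv_div]
end

section
/- Let (a_m)_{m∈ℤ} be a sequence of nonnegative real numbers with Σ_{m∈ℤ} a_m² < ∞. Then Σ_{m∈ℤ, m≠n} a_m/|m − n| converges to 0 as |n| → ∞; that is, for every ε > 0 there exists N such that for all integers n with |n| ≥ N one has Σ_{m≠n} a_m/|m − n| ≤ ε. -/
/-- For a square-summable nonnegative sequence `(a_m)`, the sums
`Σ_{m≠n} a_m/|m − n|` tend to `0` as `|n| → ∞`. -/
theorem stmt_6 (a : ℤ → ℝ) (ha : ∀ m, 0 ≤ a m)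
    (hs : Summable fun m => (a m) ^ 2) :
    ∀ ε : ℝ, 0 < ε → ∃ N : ℕ, ∀ n : ℤ, (N : ℤ) ≤ |n| →
      (∑' m : {m : ℤ // m ≠ n}, a m / |((m : ℤ) : ℝ) - (n : ℝ)|) ≤ ε := by
  intro ε hε
  have hb : Summable fun k : ℤ => 1 / (k : ℝ) ^ 2 :=
    Real.summable_one_div_int_pow.mpr one_lt_two
  obtain ⟨C, hC⟩ : ∃ C, C = ∑' k : ℤ, 1 / (k : ℝ) ^ 2 := ⟨_, rfl⟩
  have hC0 : 0 ≤ C := hC ▸ tsum_nonneg (fun k => by positivity)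
  obtain ⟨δ, hδ⟩ : ∃ δ, δ = ε / (C + 1) := ⟨_, rfl⟩
  have hδ0 : 0 < δ := hδ ▸ by positivity
  have hδC : δ * C ≤ ε := by
    have : δ * (C + 1) = ε := by rw [hδ]; field_simp
    nlinarith
  obtain ⟨F, hF⟩ := summable_iff_vanishing_norm.mp hs (ε * δ / 2) (by positivity)
  obtain ⟨A, hA⟩ : ∃ A, A = ∑ m ∈ F, a m := ⟨_, rfl⟩
  have hA0 : 0 ≤ A := hA ▸ Finset.sum_nonneg (fun m _ => ha m)
  obtain ⟨M, hM⟩ : ∃ M : ℝ, M = ∑ m ∈ F, |(m : ℝ)| := ⟨_, rfl⟩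
  obtain ⟨N, hN⟩ := exists_nat_ge (M + 4 * A / ε + 1)
  refine ⟨N, fun n hn => ?_⟩
  have hn' : (N : ℝ) ≤ |(n : ℝ)| := by exact_mod_cast hn
  refine Real.tsum_le_of_sum_le (fun m => div_nonneg (ha m) (abs_nonneg _)) (fun s => ?_)
  have e : ∑ m ∈ s, a m / |((m : ℤ) : ℝ) - (n : ℝ)|
      = ∑ m ∈ s.map (Function.Embedding.subtype _), a m / |(m : ℝ) - (n : ℝ)| := by
    rw [Finset.sum_map]; rfl
  rw [e]
  generalize s.map (Function.Embedding.subtype _) = t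
  rw [← Finset.sum_filter_add_sum_filter_not t (· ∈ F)]
  have h1 : ∑ m ∈ t with m ∈ F, a m / |(m : ℝ) - (n : ℝ)| ≤ ε / 4 := by
    have hD : 0 < 4 * A / ε + 1 := by positivity
    calc _ ≤ ∑ m ∈ F, a m / |(m : ℝ) - (n : ℝ)| :=
          Finset.sum_le_sum_of_subset_of_nonneg (fun x hx => (Finset.mem_filter.mp hx).2)
            (fun m _ _ => div_nonneg (ha m) (abs_nonneg _))
      _ ≤ ∑ m ∈ F, a m / (4 * A / ε + 1) := by
          refine Finset.sum_le_sum fun m hm => ?_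
          refine div_le_div_of_nonneg_left (ha m) hD ?_
          have h3 : |(m : ℝ)| ≤ M := hM ▸
            Finset.single_le_sum (f := fun m : ℤ => |(m : ℝ)|) (fun i _ => abs_nonneg _) hm
          have h4 := abs_sub_abs_le_abs_sub (n : ℝ) (m : ℝ)
          rw [abs_sub_comm] at h4
          linarith
      _ = A / (4 * A / ε + 1) := by rw [← Finset.sum_div, ← hA]
      _ ≤ ε / 4 := by
          rw [div_le_iff₀ hD]
          have : ε / 4 * (4 * A / ε + 1) = A + ε / 4 := by field_simp
          linarith
  have h2 : ∑ m ∈ t with m ∉ F, a m / |(m : ℝ) - (n : ℝ)| ≤ ε / 4 + ε / 2 := by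
    have h5 := hF (t.filter (· ∉ F)) (by
      rw [Finset.disjoint_left]; intro x hx; exact (Finset.mem_filter.mp hx).2)
    have h6 := (le_abs_self _).trans h5.le
    have h7 : ∑ m ∈ t with m ∉ F, 1 / ((m : ℝ) - n) ^ 2 ≤ C := by
      have hb' : HasSum (fun m : ℤ => 1 / ((m : ℝ) - n) ^ 2) C := by
        have := (Equiv.subRight n).hasSum_iff.mpr (hC ▸ hb.hasSum)
        convert this using 2
        simp
      exact sum_le_hasSum _ (fun _ _ => by positivity) hb'
    calc _ ≤ ∑ m ∈ t with m ∉ F, (1 / (2 * δ) * a m ^ 2 + δ / 2 * (1 / ((m : ℝ) - n) ^ 2)) := by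
          refine Finset.sum_le_sum fun m _ => ?_
          rw [← sq_abs ((m : ℝ) - n), div_eq_mul_inv, one_div (|_| ^ 2), ← inv_pow]
          generalize |(m : ℝ) - n|⁻¹ = b
          have : 1 / (2 * δ) * a m ^ 2 + δ / 2 * b ^ 2 - a m * b
            = 1 / (2 * δ) * (a m - δ * b) ^ 2 := by field_simp; ring
          have : 0 ≤ 1 / (2 * δ) * (a m - δ * b) ^ 2 := by positivity
          linarith
      _ ≤ 1 / (2 * δ) * (ε * δ / 2) + δ / 2 * C := by
          rw [Finset.sum_add_distrib, ← Finset.mul_sum, ← Finset.mul_sum]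
          gcongr
      _ ≤ _ := by
          have : 1 / (2 * δ) * (ε * δ / 2) = ε / 4 := by field_simp; norm_num
          linarith
  linarith
end
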